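/- Let A be a nonempty finite set, π a probability distribution on A, and a_1,…,a_n i.i.d. samples from π. Let π̂ denote the empirical distribution π̂(a) := (1/n)·Σ_{i=1}^n 1{a_i = a}. Then E[ TV(π̂, π) ] ≤ (1/2)·√(|A|/n), where TV(p,q) := (1/2)·Σ_{a∈A} |p(a) − q(a)|. -/

import Mathlib

open Finset

/-- `p` is a probability distribution on the finite set `A`. -/
def IsDist {A : Type} [Fintype A] (p : A → ℝ) : Prop :=
  (∀ a, 0 ≤ p a) ∧ ∑ a, p a = 1

/-- Total variation distance between two pmfs on a finite set. -/
noncomputable def tvDist {A : Type} [Fintype A] (p q : A → ℝ) : ℝ :=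
  (1 / 2) * ∑ a, |p a - q a|

/-- Probability of the sample sequence `D` under `n` i.i.d. samples from `π`. -/
noncomputable def wt1 {A : Type} {n : ℕ} (π : A → ℝ) (D : Fin n → A) : ℝ :=
  ∏ i, π (D i)

/-- The empirical distribution `π̂(a) = (1/n)·Σ_i 1{a_i = a}` of a sample. -/
noncomputable def empDist {A : Type} [DecidableEq A] {n : ℕ} (D : Fin n → A)
    (a : A) : ℝ :=
  ((univ.filter fun i => D i = a).card : ℝ) / n

/-!
By Cauchy–Schwarz over `A`, `TV(π̂, π)² ≤ (|A| / 4) · ‖π̂ - π‖₂²`, and by Jensen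
`E[TV]² ≤ E[TV²]`. It remains to bound `E[‖π̂ - π‖₂²]`: each `π̂(a) - π(a)` is an average of `n`
independent centred Bernoulli variables, so its second moment is `π(a)(1 - π(a)) / n`, and these
sum to at most `1 / n`.
-/

section ProductWeights

variable {ι R : Type*} {α : ι → Type*} [Fintype ι] [DecidableEq ι] [∀ i, Fintype (α i)]
  [CommSemiring R] {p : ∀ i, α i → R}

theorem sum_prod_mul_prod_eq_prod_sum_mul (hp : ∀ i, ∑ a, p i a = 1) (s : Finset ι)
    (f : ∀ i, α i → R) :
    ∑ x : ∀ i, α i, (∏ i, p i (x i)) * ∏ i ∈ s, f i (x i) = ∏ i ∈ s, ∑ a, p i a * f i a := by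
  calc ∑ x : ∀ i, α i, (∏ i, p i (x i)) * ∏ i ∈ s, f i (x i)
      = ∑ x : ∀ i, α i, ∏ i, p i (x i) * (if i ∈ s then f i (x i) else 1) := by
        simp only [prod_mul_distrib, Fintype.prod_ite_mem]
    _ = ∏ i, ∑ a, p i a * (if i ∈ s then f i a else 1) :=
        (Fintype.prod_sum fun i a => p i a * (if i ∈ s then f i a else 1)).symm
    _ = ∏ i, if i ∈ s then ∑ a, p i a * f i a else 1 :=
        prod_congr rfl fun i _ => by split_ifs <;> simp [hp]
    _ = ∏ i ∈ s, ∑ a, p i a * f i a := Fintype.prod_ite_mem s _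

theorem sum_prod_mul_sq_sum_of_mean_eq_zero (hp : ∀ i, ∑ a, p i a = 1) {f : ∀ i, α i → R}
    (hf : ∀ i, ∑ a, p i a * f i a = 0) :
    ∑ x : ∀ i, α i, (∏ i, p i (x i)) * (∑ i, f i (x i)) ^ 2 = ∑ i, ∑ a, p i a * f i a ^ 2 := by
  have second_moment (i : ι) :
      ∑ x : ∀ i, α i, (∏ k, p k (x k)) * (f i (x i) * f i (x i)) = ∑ a, p i a * f i a ^ 2 := by
    simpa only [prod_singleton, ← sq] using
      sum_prod_mul_prod_eq_prod_sum_mul hp {i} fun k a => f k a ^ 2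
  have covariance (i j : ι) (hij : j ≠ i) :
      ∑ x : ∀ i, α i, (∏ k, p k (x k)) * (f i (x i) * f j (x j)) = 0 := by
    simpa only [prod_pair hij.symm, hf, mul_zero] using
      sum_prod_mul_prod_eq_prod_sum_mul hp {i, j} f
  calc ∑ x : ∀ i, α i, (∏ k, p k (x k)) * (∑ i, f i (x i)) ^ 2
      = ∑ i, ∑ j, ∑ x : ∀ i, α i, (∏ k, p k (x k)) * (f i (x i) * f j (x j)) := by
        simp only [sq, sum_mul_sum]
        simp only [mul_sum]
        rw [sum_comm]
        exact sum_congr rfl fun i _ => sum_comm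
    _ = ∑ i, ∑ a, p i a * f i a ^ 2 :=
        sum_congr rfl fun i _ => by
          rw [Fintype.sum_eq_single i (covariance i), second_moment]

end ProductWeights

section Indicator

variable {α R : Type*} [Fintype α] [DecidableEq α] [CommRing R] {p : α → R}

theorem sum_mul_indicator_sub_eq_zero (hp : ∑ b, p b = 1) (a : α) :
    ∑ b, p b * ((if b = a then 1 else 0) - p a) = 0 := by
  simp [mul_sub, ← sum_mul, hp]

theorem sum_mul_sq_indicator_sub (hp : ∑ b, p b = 1) (a : α) :
    ∑ b, p b * ((if b = a then 1 else 0) - p a) ^ 2 = p a * (1 - p a) := by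
  have expand (b : α) : p b * ((if b = a then 1 else 0) - p a) ^ 2 =
      (if b = a then p b * (1 - 2 * p a) else 0) + p b * p a ^ 2 := by
    split_ifs <;> ring
  simp only [expand, sum_add_distrib, sum_ite_eq', mem_univ, if_true, ← sum_mul, hp]
  ring

end Indicator

section Sampling

variable {A : Type} {n : ℕ}

theorem isDist_wt1 [Fintype A] {π : A → ℝ} (hπ : IsDist π) (n : ℕ) :
    IsDist (wt1 (n := n) π) where
  left D := prod_nonneg fun i _ => hπ.1 (D i)
  right := by
    simpa [wt1] using
      sum_prod_mul_prod_eq_prod_sum_mul (fun _ : Fin n => hπ.2) ∅ fun _ _ => 1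

theorem empDist_sub_eq_sum [DecidableEq A] (hn : 0 < n) (D : Fin n → A) (a : A) (c : ℝ) :
    empDist D a - c = ∑ i, ((if D i = a then 1 else 0) - c) / n := by
  have hn' : (n : ℝ) ≠ 0 := by exact_mod_cast hn.ne'
  rw [← sum_div, sum_sub_distrib, sum_boole, sum_const, card_univ, Fintype.card_fin,
    nsmul_eq_mul, sub_div, mul_div_cancel_left₀ c hn', empDist]

variable [Fintype A]

theorem sq_tvDist_le (p q : A → ℝ) :
    tvDist p q ^ 2 ≤ Fintype.card A / 4 * ∑ a, (p a - q a) ^ 2 := by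
  have cauchy_schwarz : (∑ a, |p a - q a|) ^ 2 ≤ Fintype.card A * ∑ a, (p a - q a) ^ 2 := by
    simpa only [sq_abs, card_univ] using
      sq_sum_le_card_mul_sum_sq (s := univ) (f := fun a => |p a - q a|)
  rw [tvDist]
  linarith

variable [DecidableEq A] {π : A → ℝ}

theorem sum_wt1_mul_sq_empDist_sub (hπ : IsDist π) (hn : 0 < n) (a : A) :
    ∑ D : Fin n → A, wt1 π D * (empDist D a - π a) ^ 2 = π a * (1 - π a) / n := by
  have centred : ∑ b, π b * (((if b = a then 1 else 0) - π a) / n) = 0 := by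
    simp only [← mul_div_assoc, ← sum_div, sum_mul_indicator_sub_eq_zero hπ.2, zero_div]
  have hn' : (n : ℝ) ≠ 0 := by exact_mod_cast hn.ne'
  calc ∑ D : Fin n → A, wt1 π D * (empDist D a - π a) ^ 2
      = ∑ _i : Fin n, ∑ b, π b * (((if b = a then 1 else 0) - π a) / n) ^ 2 := by
        simp only [empDist_sub_eq_sum hn, wt1]
        exact sum_prod_mul_sq_sum_of_mean_eq_zero (p := fun _ => π)
          (f := fun _ b => ((if b = a then 1 else 0) - π a) / n) (fun _ => hπ.2) fun _ => centred
    _ = n * (π a * (1 - π a) / n ^ 2) := by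
        simp only [div_pow, ← mul_div_assoc, ← sum_div, sum_mul_sq_indicator_sub hπ.2, sum_const,
          card_univ, Fintype.card_fin, nsmul_eq_mul]
    _ = π a * (1 - π a) / n := by field_simp

theorem sum_wt1_mul_sum_sq_empDist_sub_le (hπ : IsDist π) (hn : 0 < n) :
    ∑ D : Fin n → A, wt1 π D * ∑ a, (empDist D a - π a) ^ 2 ≤ 1 / n := by
  calc ∑ D : Fin n → A, wt1 π D * ∑ a, (empDist D a - π a) ^ 2
      = ∑ a, π a * (1 - π a) / n := by
        simp only [mul_sum]
        rw [sum_comm]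
        exact sum_congr rfl fun a _ => sum_wt1_mul_sq_empDist_sub hπ hn a
    _ ≤ ∑ a, π a / n := by
        gcongr with a
        exact mul_le_of_le_one_right (hπ.1 a) (sub_le_self 1 (hπ.1 a))
    _ = 1 / n := by rw [← sum_div, hπ.2]

theorem sum_wt1_mul_sq_tvDist_le (hπ : IsDist π) (hn : 0 < n) :
    ∑ D : Fin n → A, wt1 π D * tvDist (empDist D) π ^ 2 ≤
      (1 / 2) ^ 2 * (Fintype.card A / n) := by
  calc ∑ D : Fin n → A, wt1 π D * tvDist (empDist D) π ^ 2
      ≤ ∑ D : Fin n → A, wt1 π D * (Fintype.card A / 4 * ∑ a, (empDist D a - π a) ^ 2) := by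
        gcongr with D
        · exact (isDist_wt1 hπ n).1 D
        · exact sq_tvDist_le _ _
    _ = Fintype.card A / 4 * ∑ D : Fin n → A, wt1 π D * ∑ a, (empDist D a - π a) ^ 2 := by
        rw [mul_sum]
        exact sum_congr rfl fun D _ => mul_left_comm _ _ _
    _ ≤ Fintype.card A / 4 * (1 / n) := by
        gcongr
        exact sum_wt1_mul_sum_sq_empDist_sub_le hπ hn
    _ = (1 / 2) ^ 2 * (Fintype.card A / n) := by ring

end Sampling

/-- the expected total variation between the empirical distribution
of `n` i.i.d. samples and the truth is at most `(1/2)·√(|A|/n)`. -/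
theorem stmt_17 (A : Type) [Fintype A] [Nonempty A] [DecidableEq A]
    (π : A → ℝ) (hπ : IsDist π) (n : ℕ) (hn : 0 < n) :
    ∑ D : Fin n → A, wt1 π D * tvDist (empDist D) π ≤
      (1 / 2) * Real.sqrt ((Fintype.card A : ℝ) / n) := by
  have hw := isDist_wt1 hπ n
  have jensen : (∑ D : Fin n → A, wt1 π D * tvDist (empDist D) π) ^ 2 ≤
      ∑ D : Fin n → A, wt1 π D * tvDist (empDist D) π ^ 2 :=
    Real.pow_arith_mean_le_arith_mean_pow_of_even univ _ _ (fun D _ => hw.1 D) hw.2 even_two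
  calc ∑ D : Fin n → A, wt1 π D * tvDist (empDist D) π
      ≤ √((1 / 2) ^ 2 * (Fintype.card A / n)) :=
        Real.le_sqrt_of_sq_le (jensen.trans (sum_wt1_mul_sq_tvDist_le hπ hn))
    _ = (1 / 2) * √(Fintype.card A / n) := by
        rw [Real.sqrt_mul (by positivity), Real.sqrt_sq (by norm_num)]
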